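/- (Proposition 3) For every hybrid formula φ: the sequent ⊢ φ is provable in the calculus DS if and only if the disjunctive state P : φ is winning. -/

import Mathlib

/-- Hybrid logic formulas over nominals `ℕ` and propositional variables `ℕ`
(the two sorts are kept disjoint by the constructors). -/
inductive Form : Type where
  | prop : ℕ → Form
  | nom : ℕ → Form
  | rel : ℕ → ℕ → Form
  | and : Form → Form → Form
  | or : Form → Form → Form
  | imp : Form → Form → Form
  | neg : Form → Form
  | at_ : ℕ → Form → Form
  | box : Form → Form
  | dia : Form → Form

/-- A model for hybrid logic: a nonempty set of worlds, an accessibility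
relation, a valuation and an assignment of nominals to worlds. -/
structure Model where
  W : Type
  ne : Nonempty W
  R : W → W → Prop
  V : ℕ → W → Prop
  g : ℕ → W

/-- Satisfaction of a formula at a world of a model. -/
def sat (M : Model) : M.W → Form → Prop
  | w, .prop p => M.V p w
  | w, .nom i => M.g i = w
  | _, .rel i j => M.R (M.g i) (M.g j)
  | w, .and φ ψ => sat M w φ ∧ sat M w ψ
  | w, .or φ ψ => sat M w φ ∨ sat M w ψ
  | w, .imp φ ψ => ¬ sat M w φ ∨ sat M w ψ
  | w, .neg φ => ¬ sat M w φ
  | _, .at_ i φ => sat M (M.g i) φ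
  | w, .box φ => ∀ v, M.R w v → sat M v φ
  | w, .dia φ => ∃ v, M.R w v ∧ sat M v φ

/-- A model is named iff every world has a name, i.e. the assignment is surjective. -/
def Model.Named (M : Model) : Prop := Function.Surjective M.g

/-- A formula is valid iff it is true at every world of every model. -/
def Valid (φ : Form) : Prop := ∀ (M : Model) (w : M.W), sat M w φ

/-- Roles: `pro` means I am the proponent (`P`), `opp` that I am the opponent (`O`). -/
inductive Role : Type where
  | pro : Role
  | opp : Role

/-- Role switch. -/
def Role.swap : Role → Role
  | .pro => .opp
  | .opp => .pro

/-- Game states of the semantic game over a named model, with worlds referred to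
by their names: `loc r i φ` is `Q, i : φ` and `glob r φ` is `Q : φ`. -/
inductive NState : Type where
  | loc : Role → ℕ → Form → NState
  | glob : Role → Form → NState

/-- Elementary formulas: `p`, `i`, `R(i,j)`. -/
def Form.elem : Form → Prop
  | .prop _ => True
  | .nom _ => True
  | .rel _ _ => True
  | _ => False

/-- Elementary game states: states `Q, i : φ` with `φ` elementary (these are the
leaves of the semantic game over named models). -/
def NState.elem : NState → Prop
  | .loc _ _ φ => φ.elem
  | .glob _ _ => False

/-- States labelled "I" (where it is My choice); all other non-leaf states are labelled "Y". -/
def NState.myTurn : NState → Prop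
  | .loc .pro _ (.or _ _) => True
  | .loc .pro _ (.imp _ _) => True
  | .loc .pro _ (.neg _) => True
  | .loc .pro _ (.at_ _ _) => True
  | .loc .pro _ (.dia _) => True
  | .loc .opp _ (.and _ _) => True
  | .loc .opp _ (.box _) => True
  | .glob .opp _ => True
  | _ => False

/-- The (model-independent) child relation of the semantic game over named models,
using the reformulated rules `(R_□)`, `(R_◇)` and `(R_U)`:
`NChild s t` says that `t` is a child of `s` in the game tree. -/
inductive NChild : NState → NState → Prop where
  | orL (r i φ ψ) : NChild (.loc r i (.or φ ψ)) (.loc r i φ)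
  | orR (r i φ ψ) : NChild (.loc r i (.or φ ψ)) (.loc r i ψ)
  | andL (r i φ ψ) : NChild (.loc r i (.and φ ψ)) (.loc r i φ)
  | andR (r i φ ψ) : NChild (.loc r i (.and φ ψ)) (.loc r i ψ)
  | impL (r i φ ψ) : NChild (.loc r i (.imp φ ψ)) (.loc r.swap i φ)
  | impR (r i φ ψ) : NChild (.loc r i (.imp φ ψ)) (.loc r i ψ)
  | neg (r i φ) : NChild (.loc r i (.neg φ)) (.loc r.swap i φ)
  | at_ (r i j φ) : NChild (.loc r i (.at_ j φ)) (.loc r j φ)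
  | box (r i φ) (j : ℕ) : NChild (.loc r i (.box φ)) (.loc r j (.or (.neg (.rel i j)) φ))
  | dia (r i φ) (j : ℕ) : NChild (.loc r i (.dia φ)) (.loc r j (.and (.rel i j) φ))
  | glob (r φ) (i : ℕ) : NChild (.glob r φ) (.loc r i φ)

/-- The label of an elementary leaf state in the game over the model `M`:
"I" iff the corresponding elementary claim is correct. -/
def elemIWin (M : Model) : NState → Prop
  | .loc .pro i φ => sat M (M.g i) φ
  | .loc .opp i φ => ¬ sat M (M.g i) φ
  | .glob _ _ => False

/-- I have a winning strategy for the semantic game `G(M, s)` over a named model: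
at "I"-nodes I keep one child, at "Y"-nodes all children, and all leaves are labelled "I". -/
inductive IWinsN (M : Model) : NState → Prop where
  | leaf {s} : s.elem → elemIWin M s → IWinsN M s
  | move {s t} : s.myTurn → NChild s t → IWinsN M t → IWinsN M s
  | resp {s} : ¬ s.myTurn → ¬ s.elem → (∀ t, NChild s t → IWinsN M t) → IWinsN M s

/-- You have a winning strategy for the semantic game `G(M, s)` over a named model:
at "Y"-nodes You keep one child, at "I"-nodes all children, and all leaves are labelled "Y". -/
inductive YWinsN (M : Model) : NState → Prop where
  | leaf {s} : s.elem → ¬ elemIWin M s → YWinsN M s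
  | move {s t} : ¬ s.myTurn → NChild s t → YWinsN M t → YWinsN M s
  | resp {s} : s.myTurn → (∀ t, NChild s t → YWinsN M t) → YWinsN M s

/-- A disjunctive state: a finite multiset of game states. -/
abbrev DState : Type := Multiset NState

/-- A disjunctive state is elementary iff all its game states are. -/
def DElem (D : DState) : Prop := ∀ s ∈ D, s.elem

/-- A regulation function maps every non-elementary disjunctive state to one of
its non-elementary game states. -/
def IsRegulation (ρ : DState → NState) : Prop :=
  ∀ D : DState, ¬ DElem D → ρ D ∈ D ∧ ¬ (ρ D).elem

/-- `D` is game valid: for every named model `M` there is a member of `D` for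
which I have a winning strategy in the semantic game over `M`. -/
def GameValid (D : DState) : Prop :=
  ∀ M : Model, M.Named → ∃ s ∈ D, IWinsN M s

/-- I have a winning strategy for the disjunctive game `DG(D, ρ)`.
At the state `g ⋁ D` with `ρ (g ⋁ D) = g`: if `g` is labelled "I", I either move in `g`
or duplicate `g`; if `g` is labelled "Y", You move in `g` and I must win after every move.
An elementary disjunctive state is a leaf labelled "I" (winning for Me) iff for every named
model some member of it is a leaf labelled "I" of the semantic game over that model.
Since winning strategies are wellfounded trees, infinite plays are not winning for Me. -/
inductive DWins (ρ : DState → NState) : DState → Prop where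
  | leaf {D : DState} : DElem D → (∀ M : Model, M.Named → ∃ s ∈ D, IWinsN M s) →
      DWins ρ D
  | movI {D : DState} {g g' : NState} : ρ (g ::ₘ D) = g → g.myTurn → NChild g g' →
      DWins ρ (g' ::ₘ D) → DWins ρ (g ::ₘ D)
  | dup {D : DState} {g : NState} : ρ (g ::ₘ D) = g → g.myTurn →
      DWins ρ (g ::ₘ g ::ₘ D) → DWins ρ (g ::ₘ D)
  | movY {D : DState} {g : NState} : ρ (g ::ₘ D) = g → ¬ g.myTurn → ¬ g.elem →
      (∀ g', NChild g g' → DWins ρ (g' ::ₘ D)) → DWins ρ (g ::ₘ D)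

/-- `D` is winning: there is a regulation `ρ` such that I have a winning strategy
for `DG(D, ρ)`. -/
def Winning (D : DState) : Prop :=
  ∃ ρ : DState → NState, IsRegulation ρ ∧ DWins ρ D

/-- `Form.occurs k φ`: the nominal `k` occurs in the formula `φ`. -/
def Form.occurs (k : ℕ) : Form → Prop
  | .prop _ => False
  | .nom i => i = k
  | .rel i j => i = k ∨ j = k
  | .and φ ψ => φ.occurs k ∨ ψ.occurs k
  | .or φ ψ => φ.occurs k ∨ ψ.occurs k
  | .imp φ ψ => φ.occurs k ∨ ψ.occurs k
  | .neg φ => φ.occurs k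
  | .at_ i φ => i = k ∨ φ.occurs k
  | .box φ => φ.occurs k
  | .dia φ => φ.occurs k

/-- A nominal occurs in a game state iff it occurs as its label or in its formula. -/
def NState.occurs (k : ℕ) : NState → Prop
  | .loc _ i φ => i = k ∨ φ.occurs k
  | .glob _ φ => φ.occurs k

/-- A nominal occurs in a disjunctive state iff it occurs in one of its game states. -/
def DOccurs (k : ℕ) (D : DState) : Prop := ∃ s ∈ D, s.occurs k

/-- Labelled formulas `i : φ` and plain (unlabelled) formulas. -/
inductive LForm : Type where
  | lab : ℕ → Form → LForm
  | plain : Form → LForm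

/-- Elementary formulas: `p`, `i`, `R(i,j)`. -/
def Form.elemF : Form → Prop
  | .prop _ => True
  | .nom _ => True
  | .rel _ _ => True
  | _ => False

/-- Elementary members of a sequent: labelled elementary formulas. -/
def LForm.elemL : LForm → Prop
  | .lab _ φ => φ.elemF
  | .plain _ => False

/-- `Form.occursF k φ`: the nominal `k` occurs in the formula `φ`. -/
def Form.occursF (k : ℕ) : Form → Prop
  | .prop _ => False
  | .nom i => i = k
  | .rel i j => i = k ∨ j = k
  | .and φ ψ => φ.occursF k ∨ ψ.occursF k
  | .or φ ψ => φ.occursF k ∨ ψ.occursF k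
  | .imp φ ψ => φ.occursF k ∨ ψ.occursF k
  | .neg φ => φ.occursF k
  | .at_ i φ => i = k ∨ φ.occursF k
  | .box φ => φ.occursF k
  | .dia φ => φ.occursF k

/-- A nominal occurs in a (labelled) formula. -/
def LForm.occursL (k : ℕ) : LForm → Prop
  | .lab i φ => i = k ∨ φ.occursF k
  | .plain φ => φ.occursF k

/-- The sequent `Γ ⊢ Δ` is (game) valid: for every named model, some labelled formula
of `Δ` is true at (the world named by) its label, or some labelled formula of `Γ` is
false at its label. -/
def SeqValid (Γ Δ : Multiset LForm) : Prop :=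
  ∀ M : Model, M.Named →
    (∃ i φ, LForm.lab i φ ∈ Δ ∧ sat M (M.g i) φ) ∨
    (∃ i φ, LForm.lab i φ ∈ Γ ∧ ¬ sat M (M.g i) φ)

/-- The sequent calculus `DS`. `DS Γ Δ` means that `Γ ⊢ Δ` is provable. -/
inductive DS : Multiset LForm → Multiset LForm → Prop where
  | V {Γ Δ} : (∀ f ∈ Γ, LForm.elemL f) → (∀ f ∈ Δ, LForm.elemL f) → SeqValid Γ Δ →
      DS Γ Δ
  | CL {Γ Δ i φ} : DS (.lab i φ ::ₘ .lab i φ ::ₘ Γ) Δ → DS (.lab i φ ::ₘ Γ) Δ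
  | CR {Γ Δ i φ} : DS Γ (.lab i φ ::ₘ .lab i φ ::ₘ Δ) → DS Γ (.lab i φ ::ₘ Δ)
  | U {i φ} : ¬ Form.occursF i φ → DS 0 {LForm.lab i φ} → DS 0 {LForm.plain φ}
  | Lor {Γ Δ i φ ψ} : DS (.lab i φ ::ₘ Γ) Δ → DS (.lab i ψ ::ₘ Γ) Δ →
      DS (.lab i (.or φ ψ) ::ₘ Γ) Δ
  | Ror1 {Γ Δ i φ ψ} : DS Γ (.lab i φ ::ₘ Δ) → DS Γ (.lab i (.or φ ψ) ::ₘ Δ)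
  | Ror2 {Γ Δ i φ ψ} : DS Γ (.lab i ψ ::ₘ Δ) → DS Γ (.lab i (.or φ ψ) ::ₘ Δ)
  | Land1 {Γ Δ i φ ψ} : DS (.lab i φ ::ₘ Γ) Δ → DS (.lab i (.and φ ψ) ::ₘ Γ) Δ
  | Land2 {Γ Δ i φ ψ} : DS (.lab i ψ ::ₘ Γ) Δ → DS (.lab i (.and φ ψ) ::ₘ Γ) Δ
  | Rand {Γ Δ i φ ψ} : DS Γ (.lab i φ ::ₘ Δ) → DS Γ (.lab i ψ ::ₘ Δ) →
      DS Γ (.lab i (.and φ ψ) ::ₘ Δ)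
  | Limp {Γ Δ i φ ψ} : DS Γ (.lab i φ ::ₘ Δ) → DS (.lab i ψ ::ₘ Γ) Δ →
      DS (.lab i (.imp φ ψ) ::ₘ Γ) Δ
  | Rimp1 {Γ Δ i φ ψ} : DS (.lab i φ ::ₘ Γ) Δ → DS Γ (.lab i (.imp φ ψ) ::ₘ Δ)
  | Rimp2 {Γ Δ i φ ψ} : DS Γ (.lab i ψ ::ₘ Δ) → DS Γ (.lab i (.imp φ ψ) ::ₘ Δ)
  | Lneg {Γ Δ i φ} : DS Γ (.lab i φ ::ₘ Δ) → DS (.lab i (.neg φ) ::ₘ Γ) Δ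
  | Rneg {Γ Δ i φ} : DS (.lab i φ ::ₘ Γ) Δ → DS Γ (.lab i (.neg φ) ::ₘ Δ)
  | Lat {Γ Δ i j φ} : DS (.lab j φ ::ₘ Γ) Δ → DS (.lab i (.at_ j φ) ::ₘ Γ) Δ
  | Rat {Γ Δ i j φ} : DS Γ (.lab j φ ::ₘ Δ) → DS Γ (.lab i (.at_ j φ) ::ₘ Δ)
  | Lbox {Γ Δ i j φ} : DS (.lab j (.or (.neg (.rel i j)) φ) ::ₘ Γ) Δ →
      DS (.lab i (.box φ) ::ₘ Γ) Δ
  | Rbox {Γ Δ i j φ} : (∀ f ∈ Γ, ¬ LForm.occursL j f) → (∀ f ∈ Δ, ¬ LForm.occursL j f) →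
      j ≠ i → ¬ Form.occursF j φ →
      DS Γ (.lab j (.or (.neg (.rel i j)) φ) ::ₘ Δ) → DS Γ (.lab i (.box φ) ::ₘ Δ)
  | Ldia {Γ Δ i j φ} : (∀ f ∈ Γ, ¬ LForm.occursL j f) → (∀ f ∈ Δ, ¬ LForm.occursL j f) →
      j ≠ i → ¬ Form.occursF j φ →
      DS (.lab j (.and (.rel i j) φ) ::ₘ Γ) Δ → DS (.lab i (.dia φ) ::ₘ Γ) Δ
  | Rdia {Γ Δ i j φ} : DS Γ (.lab j (.and (.rel i j) φ) ::ₘ Δ) →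
      DS Γ (.lab i (.dia φ) ::ₘ Δ)

/-!
Read from the end sequent upwards, a `DS`-derivation is a strategy for the disjunctive game in
which I choose the game state to be played, and conversely. This freedom gives Me no advantage
over a regulation: the states I win in the free game form a least fixed point, so they carry
ordinal ranks, and a single regulation selecting a game state in which I can force the rank to
drop serves all of them at once.

Two rules of `DS` have no counterpart in the game. Contraction of a Y-state, which cannot be
duplicated, is admissible because Your moves are invertible. The eigenvariable rules prove one
premise where the game demands infinitely many, and these are obtained by renaming the
eigenvariable. Validity of the leaves survives non-injective renamings because an elementary
sequent holds, after renaming, in `M` iff it holds in the named submodel of `M` consisting of the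
worlds that the new names denote.
-/

open Function Multiset OrdinalApprox

/-! ### Ranking the elements of a least fixed point -/

theorem exists_rank_mem_lfp.{u} {α : Type u} (F : Set α →o Set α) :
    ∃ rank : α → Ordinal.{u}, ∀ a ∈ F.lfp, a ∈ F {b | b ∈ F.lfp ∧ rank b < rank a} := by
  let rank (a : α) : Ordinal.{u} := sInf {i | a ∈ lfpApprox F ⊥ i}
  have rank_le {a : α} {i : Ordinal.{u}} (h : a ∈ lfpApprox F ⊥ i) : rank a ≤ i := csInf_le' h
  have approx_le : ∀ i, lfpApprox F ⊥ i ≤ F.lfp :=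
    lfpApprox_le_of_mem_fixedPoints F F.isFixedPt_lfp bot_le
  refine ⟨rank, fun a ha ↦ ?_⟩
  obtain ⟨o, ho⟩ := lfp_mem_range_lfpApprox F
  have mem_rank : a ∈ lfpApprox F ⊥ (rank a) :=
    csInf_mem (s := {i | a ∈ lfpApprox F ⊥ i}) ⟨o, ho.ge ha⟩
  obtain ⟨i, hi, hai⟩ : ∃ i < rank a, a ∈ F (lfpApprox F ⊥ i) := by
    rw [lfpApprox, bot_sup_eq] at mem_rank
    simpa only [Set.iSup_eq_iUnion, Set.mem_iUnion, exists_prop] using mem_rank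
  have drop : lfpApprox F ⊥ i ≤ {b | b ∈ F.lfp ∧ rank b < rank a} :=
    fun b hb ↦ ⟨approx_le i hb, (rank_le hb).trans_lt hi⟩
  exact F.monotone drop hai

/-! ### Elementary game states -/

theorem NState.not_myTurn_of_elem {s : NState} (hs : s.elem) : ¬ s.myTurn := by
  rcases s with ⟨_ | _, i, _ | _ | _ | _ | _ | _ | _ | _ | _ | _⟩ | ⟨r, φ⟩ <;>
    first | exact id | exact hs.elim

theorem iWinsN_iff_of_elem {M : Model} {s : NState} (hs : s.elem) :
    IWinsN M s ↔ elemIWin M s := by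
  refine ⟨fun h ↦ ?_, .leaf hs⟩
  cases h with
  | leaf _ h => exact h
  | move hm _ _ => exact absurd hm (NState.not_myTurn_of_elem hs)
  | resp _ he _ => exact absurd hs he

/-! ### The unregulated disjunctive game -/

/-- I have a winning strategy for the disjunctive game from the given state when, instead of
following a regulation function, I choose at each turn which game state is played next. -/
inductive FreeWins : DState → Prop where
  | leaf {D : DState} : DElem D → GameValid D → FreeWins D
  | movI {D : DState} {g g' : NState} : g.myTurn → NChild g g' →
      FreeWins (g' ::ₘ D) → FreeWins (g ::ₘ D)
  | dup {D : DState} {g : NState} : g.myTurn → FreeWins (g ::ₘ g ::ₘ D) → FreeWins (g ::ₘ D)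
  | movY {D : DState} {g : NState} : ¬ g.myTurn → ¬ g.elem →
      (∀ g', NChild g g' → FreeWins (g' ::ₘ D)) → FreeWins (g ::ₘ D)

theorem DWins.freeWins {ρ : DState → NState} {D : DState} (h : DWins ρ D) : FreeWins D := by
  induction h with
  | leaf hD hV => exact .leaf hD hV
  | movI _ hm hc _ ih => exact .movI hm hc ih
  | dup _ hm _ ih => exact .dup hm ih
  | movY _ hm he _ ih => exact .movY hm he ih

/-- By playing in `g`, I can make sure that the successor of `g ⋁ D` in the disjunctive game
belongs to `X`. -/
def Forces (X : Set DState) (g : NState) (D : DState) : Prop :=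
  g.myTurn ∧ ((∃ g', NChild g g' ∧ g' ::ₘ D ∈ X) ∨ g ::ₘ g ::ₘ D ∈ X) ∨
    ¬ g.myTurn ∧ ¬ g.elem ∧ ∀ g', NChild g g' → g' ::ₘ D ∈ X

theorem Forces.mono {X Y : Set DState} (hXY : X ⊆ Y) {g : NState} {D : DState}
    (h : Forces X g D) : Forces Y g D :=
  h.imp
    (.imp_right (.imp (fun ⟨g', hc, hg'⟩ ↦ ⟨g', hc, hXY hg'⟩) (@hXY _)))
    (.imp_right (.imp_right fun hall g' hc ↦ hXY (hall g' hc)))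

theorem Forces.not_elem {X : Set DState} {g : NState} {D : DState} (h : Forces X g D) :
    ¬ g.elem :=
  h.elim (fun ⟨hm, _⟩ he ↦ NState.not_myTurn_of_elem he hm) fun ⟨_, he, _⟩ ↦ he

theorem Forces.dWins {ρ : DState → NState} {g : NState} {D : DState} (hρ : ρ (g ::ₘ D) = g)
    (h : Forces {E | DWins ρ E} g D) : DWins ρ (g ::ₘ D) := by
  rcases h with ⟨hm, ⟨g', hc, hg'⟩ | hgg⟩ | ⟨hm, he, hall⟩
  · exact .movI hρ hm hc hg'
  · exact .dup hρ hm hgg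
  · exact .movY hρ hm he hall

/-- The operator sending `X` to the disjunctive states that are won immediately or from which
I can force the next state into `X`; its least fixed point consists of the states I win in the
unregulated game. -/
def winOp : Set DState →o Set DState where
  toFun X := {E | DElem E ∧ GameValid E ∨ ∃ g D, E = g ::ₘ D ∧ Forces X g D}
  monotone' _ _ hXY _ := .imp_right fun ⟨g, D, hE, h⟩ ↦ ⟨g, D, hE, h.mono hXY⟩

theorem FreeWins.mem_lfp_winOp {E : DState} (h : FreeWins E) : E ∈ winOp.lfp := by
  induction h with rw [← winOp.map_lfp]
  | leaf hD hV => exact .inl ⟨hD, hV⟩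
  | movI hm hc _ ih => exact .inr ⟨_, _, rfl, .inl ⟨hm, .inl ⟨_, hc, ih⟩⟩⟩
  | dup hm _ ih => exact .inr ⟨_, _, rfl, .inl ⟨hm, .inr ih⟩⟩
  | movY hm he _ ih => exact .inr ⟨_, _, rfl, .inr ⟨hm, he, ih⟩⟩

theorem exists_isRegulation_dWins :
    ∃ ρ, IsRegulation ρ ∧ ∀ D, FreeWins D → DWins ρ D := by
  obtain ⟨rank, hrank⟩ := exists_rank_mem_lfp winOp
  let lower (D : DState) : Set DState := {E | E ∈ winOp.lfp ∧ rank E < rank D}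
  have select : ∀ D, ¬ DElem D → ∃ g, (g ∈ D ∧ ¬ g.elem) ∧
      (D ∈ winOp.lfp → ∃ D', D = g ::ₘ D' ∧ Forces (lower D) g D') := by
    intro D hD
    by_cases hwin : D ∈ winOp.lfp
    · rcases hrank D hwin with ⟨hD', _⟩ | ⟨g, D', rfl, hg⟩
      · exact absurd hD' hD
      · exact ⟨g, ⟨mem_cons_self g D', hg.not_elem⟩, fun _ ↦ ⟨D', rfl, hg⟩⟩
    · obtain ⟨g, hgD, hg⟩ : ∃ g ∈ D, ¬ g.elem := by
        simpa only [DElem, not_forall, exists_prop] using hD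
      exact ⟨g, ⟨hgD, hg⟩, fun h ↦ absurd h hwin⟩
  have : Nonempty NState := ⟨.glob .pro (.prop 0)⟩
  choose! ρ hρ hforces using select
  refine ⟨ρ, hρ, fun D hD ↦ ?_⟩
  replace hD : D ∈ winOp.lfp := hD.mem_lfp_winOp
  induction hα : rank D using WellFoundedLT.induction generalizing D with
  | ind α ih =>
    subst hα
    by_cases hel : DElem D
    · rcases hrank D hD with ⟨_, hV⟩ | ⟨g, D', rfl, hg⟩
      · exact .leaf hel hV
      · exact absurd (hel g (mem_cons_self g D')) hg.not_elem
    · obtain ⟨D', hDD', hg⟩ := hforces D hel hD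
      have lower_wins : lower D ⊆ {E | DWins ρ E} := fun E ⟨hE, hlt⟩ ↦ ih (rank E) hlt E hE rfl
      rw [hDD']
      exact (hg.mono lower_wins).dWins (by rw [← hDD'])

theorem winning_iff_freeWins {D : DState} : Winning D ↔ FreeWins D := by
  obtain ⟨ρ, hρ, hwins⟩ := exists_isRegulation_dWins
  exact ⟨fun ⟨_, _, h⟩ ↦ h.freeWins, fun h ↦ ⟨ρ, hρ, hwins D h⟩⟩

/-! ### Admissibility of contraction -/

theorem exists_cons_of_add_eq_cons {α : Type*} {s t u : Multiset α} {a : α}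
    (h : s + t = a ::ₘ u) (ha : a ∉ s) : ∃ t', t = a ::ₘ t' ∧ u = s + t' := by
  have mem_sum : a ∈ s + t := h ▸ mem_cons_self a u
  obtain ⟨t', rfl⟩ := exists_cons_of_mem ((mem_add.1 mem_sum).resolve_left ha)
  exact ⟨t', rfl, by simpa only [add_cons, cons_inj_right, eq_comm] using h⟩

/-- A strategy that wins `A ⋁ D` also wins `B ⋁ D` as long as it leaves `A` alone. -/
theorem FreeWins.replace {A B : DState} (hA : ∀ g ∈ A, ¬ g.myTurn)
    (hleaf : ∀ D, DElem (A + D) → GameValid (A + D) → FreeWins (B + D))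
    (hmove : ∀ g A' D, A = g ::ₘ A' → ¬ g.elem →
      (∀ g', NChild g g' → FreeWins (g' ::ₘ (A' + D))) → FreeWins (B + D))
    {D : DState} (h : FreeWins (A + D)) : FreeWins (B + D) := by
  generalize hE : A + D = E at h
  induction h generalizing D with
  | leaf hD hV => subst hE; exact hleaf D hD hV
  | @movI D₀ g g' hm hc _ ih =>
    obtain ⟨D', rfl, rfl⟩ := exists_cons_of_add_eq_cons hE fun hg ↦ hA g hg hm
    rw [add_cons]
    exact .movI hm hc (by simpa only [add_cons] using ih (add_cons g' A D'))
  | @dup D₀ g hm _ ih =>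
    obtain ⟨D', rfl, rfl⟩ := exists_cons_of_add_eq_cons hE fun hg ↦ hA g hg hm
    rw [add_cons]
    refine .dup hm ?_
    simpa only [add_cons] using ih (D := g ::ₘ g ::ₘ D') (by simp only [add_cons])
  | @movY D₀ g hm he hall ih =>
    by_cases hg : g ∈ A
    · obtain ⟨A', rfl⟩ := exists_cons_of_mem hg
      obtain rfl : A' + D = D₀ := by simpa only [cons_add, cons_inj_right] using hE
      exact hmove g A' D rfl he hall
    · obtain ⟨D', rfl, rfl⟩ := exists_cons_of_add_eq_cons hE hg
      rw [add_cons]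
      exact .movY hm he fun g' hc ↦ by simpa only [add_cons] using ih g' hc (add_cons g' A D')

theorem FreeWins.of_child {g g' : NState} {D : DState} (hm : ¬ g.myTurn) (he : ¬ g.elem)
    (hc : NChild g g') (h : FreeWins (g ::ₘ D)) : FreeWins (g' ::ₘ D) := by
  rw [← singleton_add] at h ⊢
  refine h.replace (fun s hs ↦ mem_singleton.1 hs ▸ hm) (fun D hD _ ↦ ?_)
    fun s A D hA _ hall ↦ ?_
  · exact absurd (hD g (mem_add.2 (.inl (mem_singleton_self g)))) he
  · obtain ⟨rfl, rfl⟩ : g = s ∧ A = 0 := by simpa using hA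
    simpa only [zero_add, singleton_add] using hall _ hc

/-- `g ⋁ g ⋁ D` is no easier for Me than `g ⋁ D`. -/
def Contractible (g : NState) : Prop := ∀ D, FreeWins (g ::ₘ g ::ₘ D) → FreeWins (g ::ₘ D)

theorem contractible_of_elem {g : NState} (hg : g.elem) : Contractible g := by
  intro D h
  rw [← singleton_add, ← singleton_add, ← add_assoc] at h
  rw [← singleton_add]
  have mem_pair {s : NState} (hs : s ∈ ({g} + {g} : DState)) : s = g := by simpa using hs
  refine h.replace (fun s hs ↦ mem_pair hs ▸ NState.not_myTurn_of_elem hg) (fun D hD hV ↦ ?_)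
    fun s A D hA hs _ ↦ ?_
  · have mem_of_mem {s} (hs : s ∈ {g} + {g} + D) : s ∈ {g} + D := by simpa using hs
    have mem_of_mem' {s} (hs : s ∈ {g} + D) : s ∈ {g} + {g} + D := by simpa using hs
    refine .leaf (fun s hs ↦ hD s (mem_of_mem' hs)) fun M hM ↦ ?_
    obtain ⟨s, hs, hwin⟩ := hV M hM
    exact ⟨s, mem_of_mem hs, hwin⟩
  · exact absurd (mem_pair (hA ▸ mem_cons_self s A) ▸ hg) hs

theorem contractible_of_forall_child {g : NState}
    (h : ∀ g', NChild g g' → Contractible g') : Contractible g := by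
  by_cases hm : g.myTurn
  · exact fun D ↦ .dup hm
  by_cases he : g.elem
  · exact contractible_of_elem he
  refine fun D hw ↦ .movY hm he fun g' hc ↦ h g' hc D ?_
  have once : FreeWins (g ::ₘ g' ::ₘ D) := by simpa only [cons_swap] using hw.of_child hm he hc
  exact once.of_child hm he hc

theorem contractible_loc (φ : Form) (r : Role) (i : ℕ) : Contractible (.loc r i φ) := by
  induction φ generalizing r i with
  | prop | nom | rel => exact contractible_of_elem trivial
  | and φ ψ ihφ ihψ | or φ ψ ihφ ihψ | imp φ ψ ihφ ihψ =>
    refine contractible_of_forall_child ?_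
    rintro _ ⟨⟩
    exacts [ihφ _ _, ihψ _ _]
  | neg φ ih | at_ j φ ih =>
    refine contractible_of_forall_child ?_
    rintro _ ⟨⟩
    exact ih _ _
  | box φ =>
    cases r with
    | opp => exact fun D ↦ .dup trivial
    | pro =>
      refine contractible_of_forall_child ?_
      rintro _ ⟨⟩
      exact fun D ↦ .dup trivial
  | dia φ =>
    cases r with
    | pro => exact fun D ↦ .dup trivial
    | opp =>
      refine contractible_of_forall_child ?_
      rintro _ ⟨⟩
      exact fun D ↦ .dup trivial

/-! ### Renaming nominals -/

/-- Simultaneous renaming of the nominals of a formula. -/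
def Form.rename (σ : ℕ → ℕ) : Form → Form
  | .prop p => .prop p
  | .nom i => .nom (σ i)
  | .rel i j => .rel (σ i) (σ j)
  | .and φ ψ => .and (φ.rename σ) (ψ.rename σ)
  | .or φ ψ => .or (φ.rename σ) (ψ.rename σ)
  | .imp φ ψ => .imp (φ.rename σ) (ψ.rename σ)
  | .neg φ => .neg (φ.rename σ)
  | .at_ i φ => .at_ (σ i) (φ.rename σ)
  | .box φ => .box (φ.rename σ)
  | .dia φ => .dia (φ.rename σ)

/-- Simultaneous renaming of the nominals of a possibly labelled formula, including its label. -/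
def LForm.rename (σ : ℕ → ℕ) : LForm → LForm
  | .lab i φ => .lab (σ i) (φ.rename σ)
  | .plain φ => .plain (φ.rename σ)

theorem Form.rename_id (φ : Form) : φ.rename id = φ := by
  induction φ <;> simp_all only [Form.rename, id]

theorem LForm.rename_id (f : LForm) : f.rename id = f := by
  cases f <;> simp only [LForm.rename, Form.rename_id, id]

theorem Form.rename_update {σ : ℕ → ℕ} {j : ℕ} (k : ℕ) {φ : Form} (h : ¬ φ.occursF j) :
    φ.rename (update σ j k) = φ.rename σ := by
  induction φ <;> simp_all [Form.rename, Form.occursF]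

theorem LForm.rename_update {σ : ℕ → ℕ} {j : ℕ} (k : ℕ) {f : LForm} (h : ¬ f.occursL j) :
    f.rename (update σ j k) = f.rename σ := by
  cases f <;> simp_all [LForm.rename, LForm.occursL, Form.rename_update]

theorem map_rename_update {σ : ℕ → ℕ} {j : ℕ} (k : ℕ) {Γ : Multiset LForm}
    (h : ∀ f ∈ Γ, ¬ f.occursL j) :
    Γ.map (LForm.rename (update σ j k)) = Γ.map (LForm.rename σ) :=
  map_congr rfl fun f hf ↦ f.rename_update k (h f hf)

theorem LForm.elemL_rename {σ : ℕ → ℕ} {f : LForm} : (f.rename σ).elemL ↔ f.elemL := by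
  rcases f with ⟨i, _ | _ | _ | _ | _ | _ | _ | _ | _ | _⟩ | φ <;> rfl

theorem Form.finite_occursF (φ : Form) : {k | φ.occursF k}.Finite := by
  induction φ <;> simp_all [Form.occursF, Set.ofPred_or]

theorem LForm.finite_occursL (f : LForm) : {k | f.occursL k}.Finite := by
  cases f <;> simp [LForm.occursL, Set.ofPred_or, Form.finite_occursF]

theorem exists_fresh (Γ : Multiset LForm) : ∃ j, ∀ f ∈ Γ, ¬ f.occursL j := by
  classical
  have hfin : (⋃ f ∈ Γ.toFinset, {k | f.occursL k}).Finite :=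
    Γ.toFinset.finite_toSet.biUnion fun f _ ↦ f.finite_occursL
  obtain ⟨j, hj⟩ := hfin.exists_notMem
  exact ⟨j, by simpa using hj⟩

/-- The submodel of `M` whose worlds are the values of `M.g ∘ σ`, with `i` naming the world
`M.g (σ i)`. -/
def Model.namedBy (M : Model) (σ : ℕ → ℕ) : Model where
  W := Set.range (M.g ∘ σ)
  ne := inferInstance
  R u v := M.R u v
  V p u := M.V p u
  g := Set.rangeFactorization (M.g ∘ σ)

theorem Model.named_namedBy (M : Model) (σ : ℕ → ℕ) : (M.namedBy σ).Named :=
  Set.rangeFactorization_surjective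

theorem Model.sat_namedBy (M : Model) (σ : ℕ → ℕ) (i : ℕ) {φ : Form} (h : φ.elemF) :
    sat (M.namedBy σ) ((M.namedBy σ).g i) φ ↔ sat M (M.g (σ i)) (φ.rename σ) := by
  cases φ with
  | prop | rel => rfl
  | nom => exact Subtype.ext_iff
  | _ => exact h.elim

theorem SeqValid.rename {Γ Δ : Multiset LForm} (hΓ : ∀ f ∈ Γ, f.elemL)
    (hΔ : ∀ f ∈ Δ, f.elemL) (h : SeqValid Γ Δ) (σ : ℕ → ℕ) :
    SeqValid (Γ.map (LForm.rename σ)) (Δ.map (LForm.rename σ)) := by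
  intro M _
  refine (h _ (M.named_namedBy σ)).imp ?_ ?_ <;> rintro ⟨i, φ, hmem, hsat⟩
  · exact ⟨σ i, φ.rename σ, mem_map_of_mem _ hmem, (M.sat_namedBy σ i (hΔ _ hmem)).1 hsat⟩
  · exact ⟨σ i, φ.rename σ, mem_map_of_mem _ hmem, mt (M.sat_namedBy σ i (hΓ _ hmem)).2 hsat⟩

/-! ### Sequents as disjunctive states -/

/-- The claim that `f` holds, made by Me if `r` is `pro` and by You if `r` is `opp`. -/
def LForm.toNState (r : Role) : LForm → NState
  | .lab i φ => .loc r i φ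
  | .plain φ => .glob r φ

/-- The disjunctive state corresponding to the sequent `Γ ⊢ Δ`. -/
def disjState (Γ Δ : Multiset LForm) : DState :=
  Γ.map (LForm.toNState .opp) + Δ.map (LForm.toNState .pro)

theorem disjState_cons_left (f : LForm) (Γ Δ : Multiset LForm) :
    disjState (f ::ₘ Γ) Δ = f.toNState .opp ::ₘ disjState Γ Δ := by
  simp only [disjState, map_cons, cons_add]

theorem disjState_cons_right (f : LForm) (Γ Δ : Multiset LForm) :
    disjState Γ (f ::ₘ Δ) = f.toNState .pro ::ₘ disjState Γ Δ := by
  simp only [disjState, map_cons, add_cons]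

theorem LForm.elem_toNState {r : Role} {f : LForm} : (f.toNState r).elem ↔ f.elemL := by
  rcases f with ⟨i, _ | _ | _ | _ | _ | _ | _ | _ | _ | _⟩ | φ <;> rfl

theorem dElem_disjState {Γ Δ : Multiset LForm} :
    DElem (disjState Γ Δ) ↔ (∀ f ∈ Γ, f.elemL) ∧ ∀ f ∈ Δ, f.elemL := by
  simp only [DElem, disjState, mem_add, mem_map, or_imp, forall_and, forall_exists_index,
    and_imp, forall_apply_eq_imp_iff₂, LForm.elem_toNState]

theorem exists_elemIWin_toNState {M : Model} {r : Role} {Γ : Multiset LForm} :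
    (∃ f ∈ Γ, elemIWin M (f.toNState r)) ↔
      ∃ i φ, LForm.lab i φ ∈ Γ ∧ elemIWin M (.loc r i φ) := by
  constructor
  · rintro ⟨⟨i, φ⟩ | φ, hmem, hwin⟩
    · exact ⟨i, φ, hmem, hwin⟩
    · exact hwin.elim
  · exact fun ⟨i, φ, hmem, hwin⟩ ↦ ⟨.lab i φ, hmem, hwin⟩

theorem gameValid_disjState {Γ Δ : Multiset LForm} (hel : DElem (disjState Γ Δ)) :
    GameValid (disjState Γ Δ) ↔ SeqValid Γ Δ := by
  refine forall₂_congr fun M _ ↦ ?_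
  calc (∃ s ∈ disjState Γ Δ, IWinsN M s)
      ↔ ∃ s ∈ disjState Γ Δ, elemIWin M s :=
        exists_congr fun s ↦ and_congr_right fun hs ↦ iWinsN_iff_of_elem (hel s hs)
    _ ↔ (∃ f ∈ Δ, elemIWin M (f.toNState .pro)) ∨ ∃ f ∈ Γ, elemIWin M (f.toNState .opp) := by
        simp only [disjState, mem_add, mem_map, or_and_right, exists_or, exists_exists_and_eq_and,
          or_comm]
    _ ↔ _ := or_congr exists_elemIWin_toNState exists_elemIWin_toNState

/-! ### From derivations to strategies -/

theorem DS.freeWins_rename {Γ Δ : Multiset LForm} (h : DS Γ Δ) (σ : ℕ → ℕ) :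
    FreeWins (disjState (Γ.map (LForm.rename σ)) (Δ.map (LForm.rename σ))) := by
  induction h generalizing σ with
    try simp only [map_cons, Multiset.map_zero, ← cons_zero, disjState_cons_left,
      disjState_cons_right, LForm.rename, LForm.toNState, Form.rename] at *
  | @V Γ Δ hΓ hΔ hV =>
    have hel : DElem (disjState (Γ.map (LForm.rename σ)) (Δ.map (LForm.rename σ))) := by
      simpa [dElem_disjState, LForm.elemL_rename] using ⟨hΓ, hΔ⟩
    exact .leaf hel ((gameValid_disjState hel).2 (hV.rename hΓ hΔ σ))
  | CL _ ih | CR _ ih => exact contractible_loc _ _ _ _ (ih σ)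
  | @U i φ hi _ ih =>
    refine .movY id id ?_
    rintro _ ⟨⟩
    next k =>
    simpa only [update_self, φ.rename_update k hi] using ih (update σ i k)
  | Ror1 _ ih => exact .movI trivial (.orL ..) (ih σ)
  | Ror2 _ ih => exact .movI trivial (.orR ..) (ih σ)
  | Land1 _ ih => exact .movI trivial (.andL ..) (ih σ)
  | Land2 _ ih => exact .movI trivial (.andR ..) (ih σ)
  | Rimp1 _ ih => exact .movI trivial (.impL ..) (ih σ)
  | Rimp2 _ ih => exact .movI trivial (.impR ..) (ih σ)
  | Rneg _ ih => exact .movI trivial (.neg ..) (ih σ)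
  | Rat _ ih => exact .movI trivial (.at_ ..) (ih σ)
  | Lbox _ ih => exact .movI trivial (.box ..) (ih σ)
  | Rdia _ ih => exact .movI trivial (.dia ..) (ih σ)
  | Lneg _ ih | Lat _ ih => exact .movY id id (by rintro _ ⟨⟩; exact ih σ)
  | Lor _ _ ih₁ ih₂ | Rand _ _ ih₁ ih₂ | Limp _ _ ih₁ ih₂ =>
    exact .movY id id (by rintro _ ⟨⟩; exacts [ih₁ σ, ih₂ σ])
  | @Rbox Γ Δ i j φ hΓ hΔ hi hφ _ ih | @Ldia Γ Δ i j φ hΓ hΔ hi hφ _ ih =>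
    refine .movY id id ?_
    rintro _ ⟨⟩
    next k =>
    simpa only [update_self, update_of_ne hi.symm, Form.rename_update k hφ,
      map_rename_update k hΓ, map_rename_update k hΔ] using ih (update σ j k)

/-! ### From strategies to derivations -/

/-- The claims made by You in `D`, as the left-hand side of a sequent. -/
def antecedent (D : DState) : Multiset LForm :=
  D.filterMap fun
    | .loc .opp i φ => some (.lab i φ)
    | .glob .opp φ => some (.plain φ)
    | _ => none

/-- The claims made by Me in `D`, as the right-hand side of a sequent. -/
def succedent (D : DState) : Multiset LForm :=
  D.filterMap fun
    | .loc .pro i φ => some (.lab i φ)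
    | .glob .pro φ => some (.plain φ)
    | _ => none

/-- The sequent corresponding to `D` is provable. -/
def Provable (D : DState) : Prop := DS (antecedent D) (succedent D)

@[simp] theorem antecedent_cons_opp (i : ℕ) (φ : Form) (D : DState) :
    antecedent (.loc .opp i φ ::ₘ D) = .lab i φ ::ₘ antecedent D := filterMap_cons_some _ _ _ rfl

@[simp] theorem antecedent_cons_pro (i : ℕ) (φ : Form) (D : DState) :
    antecedent (.loc .pro i φ ::ₘ D) = antecedent D := filterMap_cons_none _ _ rfl

@[simp] theorem succedent_cons_opp (i : ℕ) (φ : Form) (D : DState) :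
    succedent (.loc .opp i φ ::ₘ D) = succedent D := filterMap_cons_none _ _ rfl

@[simp] theorem succedent_cons_pro (i : ℕ) (φ : Form) (D : DState) :
    succedent (.loc .pro i φ ::ₘ D) = .lab i φ ::ₘ succedent D := filterMap_cons_some _ _ _ rfl

theorem disjState_antecedent_succedent (D : DState) :
    disjState (antecedent D) (succedent D) = D := by
  induction D using Multiset.induction with
  | empty => rfl
  | cons s D ih =>
    rcases s with ⟨_ | _, i, φ⟩ | ⟨_ | _, φ⟩ <;>
      simpa [disjState, antecedent, succedent, LForm.toNState] using ih

theorem provable_of_dElem {D : DState} (hD : DElem D) (hV : GameValid D) : Provable D := by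
  rw [← disjState_antecedent_succedent D] at hD hV
  obtain ⟨hl, hr⟩ := dElem_disjState.1 hD
  exact .V hl hr ((gameValid_disjState hD).1 hV)

theorem Provable.contract {r : Role} {i : ℕ} {φ : Form} {D : DState}
    (h : Provable (.loc r i φ ::ₘ .loc r i φ ::ₘ D)) : Provable (.loc r i φ ::ₘ D) := by
  cases r <;> simp only [Provable, antecedent_cons_opp, antecedent_cons_pro, succedent_cons_opp,
    succedent_cons_pro] at h ⊢
  · exact .CR h
  · exact .CL h

theorem Provable.of_child {r : Role} {i : ℕ} {φ : Form} {g : NState} {D : DState}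
    (hm : (NState.loc r i φ).myTurn) (hc : NChild (.loc r i φ) g) (h : Provable (g ::ₘ D)) :
    Provable (.loc r i φ ::ₘ D) := by
  cases r <;> cases hc <;> simp only [Provable, Role.swap, antecedent_cons_opp,
    antecedent_cons_pro, succedent_cons_opp, succedent_cons_pro] at h ⊢
  case pro.orL => exact .Ror1 h
  case pro.orR => exact .Ror2 h
  case pro.impL => exact .Rimp1 h
  case pro.impR => exact .Rimp2 h
  case pro.neg => exact .Rneg h
  case pro.at_ => exact .Rat h
  case pro.dia => exact .Rdia h
  case opp.andL => exact .Land1 h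
  case opp.andR => exact .Land2 h
  case opp.box => exact .Lbox h
  all_goals exact hm.elim

theorem Provable.of_forall_child {r : Role} {i : ℕ} {φ : Form} {D : DState}
    (hm : ¬ (NState.loc r i φ).myTurn) (he : ¬ (NState.loc r i φ).elem)
    (h : ∀ g, NChild (.loc r i φ) g → Provable (g ::ₘ D)) : Provable (.loc r i φ ::ₘ D) := by
  obtain ⟨j, hj⟩ := exists_fresh (.lab i φ ::ₘ (antecedent D + succedent D))
  obtain ⟨hlab, hctx⟩ := forall_mem_cons.1 hj
  obtain ⟨hi, hφ⟩ := not_or.1 hlab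
  have hΓ : ∀ f ∈ antecedent D, ¬ f.occursL j := fun f hf ↦ hctx f (mem_add.2 (.inl hf))
  have hΔ : ∀ f ∈ succedent D, ¬ f.occursL j := fun f hf ↦ hctx f (mem_add.2 (.inr hf))
  have premise {g} (hc : NChild (.loc r i φ) g) : DS (antecedent (g ::ₘ D)) (succedent (g ::ₘ D)) :=
    h g hc
  cases r <;> cases φ <;> simp only [Provable, antecedent_cons_opp, antecedent_cons_pro,
    succedent_cons_opp, succedent_cons_pro]
  case pro.and =>
    exact .Rand (by simpa using premise (.andL ..)) (by simpa using premise (.andR ..))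
  case opp.or =>
    exact .Lor (by simpa using premise (.orL ..)) (by simpa using premise (.orR ..))
  case opp.imp =>
    exact .Limp (by simpa [Role.swap] using premise (.impL ..)) (by simpa using premise (.impR ..))
  case opp.neg => exact .Lneg (by simpa [Role.swap] using premise (.neg ..))
  case opp.at_ => exact .Lat (by simpa using premise (.at_ ..))
  case pro.box => exact .Rbox hΓ hΔ (Ne.symm hi) hφ (by simpa using premise (.box _ _ _ j))
  case opp.dia => exact .Ldia hΓ hΔ (Ne.symm hi) hφ (by simpa using premise (.dia _ _ _ j))
  case pro.prop | pro.nom | pro.rel | opp.prop | opp.nom | opp.rel => exact absurd trivial he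
  all_goals exact absurd trivial hm

/-- A game state `Q, i : φ`, as opposed to a global one `Q : φ`. -/
def NState.IsLocal (s : NState) : Prop := ∃ r i φ, s = .loc r i φ

theorem NChild.isLocal {g g' : NState} (h : NChild g g') : g'.IsLocal := by
  cases h <;> exact ⟨_, _, _, rfl⟩

theorem FreeWins.provable {D : DState} (h : FreeWins D) (hD : ∀ s ∈ D, s.IsLocal) :
    Provable D := by
  induction h with
  | leaf hel hV => exact provable_of_dElem hel hV
  | movI hm hc _ ih =>
    obtain ⟨⟨r, i, φ, rfl⟩, hctx⟩ := forall_mem_cons.1 hD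
    exact .of_child hm hc (ih (forall_mem_cons.2 ⟨hc.isLocal, hctx⟩))
  | dup _ _ ih =>
    obtain ⟨⟨r, i, φ, rfl⟩, _⟩ := forall_mem_cons.1 hD
    exact .contract (ih (forall_mem_cons.2 ⟨⟨r, i, φ, rfl⟩, hD⟩))
  | movY hm he _ ih =>
    obtain ⟨⟨r, i, φ, rfl⟩, hctx⟩ := forall_mem_cons.1 hD
    exact .of_forall_child hm he fun g hc ↦ ih g hc (forall_mem_cons.2 ⟨hc.isLocal, hctx⟩)

/-- (Proposition 3) `⊢ φ` is provable in `DS` iff the disjunctive state `P : φ` is winning. -/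
theorem ds_provable_iff_winning (φ : Form) :
    DS 0 {LForm.plain φ} ↔ Winning {NState.glob .pro φ} := by
  rw [winning_iff_freeWins]
  constructor
  · intro h
    simpa [disjState, LForm.rename_id, LForm.toNState] using h.freeWins_rename id
  · intro h
    obtain ⟨i, hi⟩ := exists_fresh {LForm.plain φ}
    have hwin : FreeWins {NState.loc .pro i φ} := h.of_child id id (.glob .pro φ i)
    have hprov : Provable {NState.loc .pro i φ} :=
      hwin.provable fun s hs ↦ ⟨_, _, _, mem_singleton.1 hs⟩
    exact .U (by simpa [LForm.occursL] using hi) hprov
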